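/- Let (a_{u,v}) be an interesting model, with Φ and Ψ the associated automorphisms of ℂ(x,y). Then (Φ∘Ψ)⁴ = id and (Φ∘Ψ)² ≠ id (equivalently, the group of the model is the dihedral group D8) if and only if the multiplicities satisfy one of the following two systems, or one of these systems after the diagonal reflection a_{u,v} ↦ a_{v,u}: (4a) a_{1,1}=a_{0,1}=a_{0,-1}=a_{-1,-1}=0 and a_{1,-1}a_{-1,1}=a_{1,0}a_{-1,0}; (4b) a_{1,-1}=a_{0,1}=a_{0,-1}=a_{-1,1}=0 and a_{1,1}a_{-1,-1}=a_{1,0}a_{-1,0}. -/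

import Mathlib

/- STATEMENT 16: Characterization of the interesting models whose group is D8:
(Φ∘Ψ)⁴ = id and (Φ∘Ψ)² ≠ id iff the multiplicities satisfy system 4a or 4b,
or one of these systems after the diagonal reflection a_{u,v} ↦ a_{v,u}. -/

noncomputable section

/-- The field ℂ(x,y) of rational functions in two variables over ℂ. -/
abbrev RF : Type := FractionRing (MvPolynomial (Fin 2) ℂ)

/-- The element x of ℂ(x,y). -/
def Xr : RF := algebraMap (MvPolynomial (Fin 2) ℂ) RF (MvPolynomial.X 0)

/-- The element y of ℂ(x,y). -/
def Yr : RF := algebraMap (MvPolynomial (Fin 2) ℂ) RF (MvPolynomial.X 1)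

/-- The constant c in ℂ(x,y). -/
def Cr (c : ℂ) : RF := algebraMap ℂ RF c

/-- A model is interesting if none of the four boundary triples of multiplicities
is the zero triple. -/
def Interesting (a : ℤ → ℤ → ℂ) : Prop :=
  ¬(a 1 (-1) = 0 ∧ a 1 0 = 0 ∧ a 1 1 = 0) ∧
  ¬(a (-1) 1 = 0 ∧ a 0 1 = 0 ∧ a 1 1 = 0) ∧
  ¬(a (-1) (-1) = 0 ∧ a (-1) 0 = 0 ∧ a (-1) 1 = 0) ∧
  ¬(a (-1) (-1) = 0 ∧ a 0 (-1) = 0 ∧ a 1 (-1) = 0)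

/-- Family 4a. -/
def Fam4a (b : ℤ → ℤ → ℂ) : Prop :=
  b 1 1 = 0 ∧ b 0 1 = 0 ∧ b 0 (-1) = 0 ∧ b (-1) (-1) = 0 ∧
  b 1 (-1) * b (-1) 1 = b 1 0 * b (-1) 0

/-- Family 4b. -/
def Fam4b (b : ℤ → ℤ → ℂ) : Prop :=
  b 1 (-1) = 0 ∧ b 0 1 = 0 ∧ b 0 (-1) = 0 ∧ b (-1) 1 = 0 ∧
  b 1 1 * b (-1) (-1) = b 1 0 * b (-1) 0

/-! Writing the step polynomial as `S(x, y)`, the curve `S(u, v) = S(x, y)` in the `(u, v)`-plane is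
biquadratic, passes through the generic point `(x, y)`, and `Φ`, `Ψ` are its Vieta involutions: they
exchange the two roots of its equation in one variable, and fix the parameter `S(x, y)`.

If `Φ ∘ Ψ` has order four, then the orbit of the generic point is a closed path of eight edges on
the curve. Moving two opposite corners of the path to `(∞, ∞)` and `(0, 0)` shows that the
coefficients of the curve satisfy Cayley's closure condition. The parameter is transcendental over
the constants, so this condition is an identity between polynomials in the parameter, and a
factorization argument turns its coefficients into the four systems. Conversely, each system makes
both involutions monomial maps, which compose to an automorphism whose square inverts `x` and `y` up
to constants. -/

section FieldExtension

theorem algHom_ext_of_adjoin_eq_top {K F E : Type*} [Field K] [Field F] [Field E]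
    [Algebra K F] [Algebra K E] {S : Set F} (hS : IntermediateField.adjoin K S = ⊤)
    {f g : F →ₐ[K] E} (hfg : S.EqOn f g) : f = g := by
  have hle : IntermediateField.adjoin K S ≤ (AlgHom.equalizer f g).toIntermediateField
      fun z hz => by simpa using hz :=
    IntermediateField.adjoin_le_iff.2 hfg
  exact AlgHom.ext fun z => hle (hS ▸ IntermediateField.mem_top)

variable {K F : Type*} [Field K] [Field F] [Algebra K F] {x y : F} {f Φ Ψ : F →ₐ[K] F}

theorem algebraicIndependent_swap (hxy : AlgebraicIndependent K ![x, y]) :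
    AlgebraicIndependent K ![y, x] := by
  convert hxy.comp ![1, 0] (by decide) using 1
  ext i; fin_cases i <;> rfl

theorem linearIndependent_pow_mul_pow (hxy : AlgebraicIndependent K ![x, y]) :
    LinearIndependent K fun n : ℕ × ℕ => x ^ n.1 * y ^ n.2 := by
  have hmono := (MvPolynomial.basisMonomials (Fin 2) K).linearIndependent.map'
    (MvPolynomial.aeval ![x, y]).toLinearMap (LinearMap.ker_eq_bot.2 hxy)
  have hinj : Function.Injective fun n : ℕ × ℕ => Finsupp.equivFunOnFinite.symm ![n.1, n.2] :=
    Finsupp.equivFunOnFinite.symm.injective.comp fun a b h =>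
      Prod.ext (congrFun h 0) (congrFun h 1)
  suffices h : (fun n : ℕ × ℕ => x ^ n.1 * y ^ n.2) = _ from h ▸ hmono.comp _ hinj
  ext n
  simp [MvPolynomial.aeval_monomial, Finsupp.prod_fintype]

theorem injective_pow_apply_of_pow_four_eq_one (h₄ : f ^ 4 = 1) {z : F} (hz : (f ^ 2) z ≠ z) :
    Function.Injective fun i : Fin 4 => (f ^ (i : ℕ)) z := by
  have hper : Function.minimalPeriod f z = 2 ^ 2 := by
    refine Function.minimalPeriod_eq_prime_pow (k := 1) ?_ ?_
    · rwa [pow_one, Function.IsPeriodicPt, Function.IsFixedPt, ← AlgHom.coe_pow]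
    · rw [Function.IsPeriodicPt, ← AlgHom.coe_pow]
      simp [h₄, Function.IsFixedPt]
  intro i j hij
  simp only [AlgHom.coe_pow] at hij
  exact Fin.ext (Function.iterate_injOn_Iio_minimalPeriod (by simp [hper]) (by simp [hper]) hij)

theorem pow_four_eq_one_and_sq_ne_one_of_sq_apply_eq_div (hxy : AlgebraicIndependent K ![x, y])
    (htop : IntermediateField.adjoin K {x, y} = ⊤) {c d : K} (hc : c ≠ 0) (hd : d ≠ 0)
    (hx : (f ^ 2) x = algebraMap K F c / x) (hy : (f ^ 2) y = algebraMap K F d / y) :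
    f ^ 4 = 1 ∧ f ^ 2 ≠ 1 := by
  have hsq {z : F} {e : K} (he : e ≠ 0) (hz : (f ^ 2) z = algebraMap K F e / z) :
      (f ^ 4) z = z := by
    rw [show f ^ 4 = f ^ 2 * f ^ 2 from pow_add f 2 2, AlgHom.mul_apply, hz, map_div₀,
      AlgHom.commutes, hz, div_div_cancel₀ ((map_ne_zero _).2 he)]
  refine ⟨algHom_ext_of_adjoin_eq_top htop ?_, fun h => ?_⟩
  · rintro z (rfl | rfl)
    exacts [hsq hc hx, hsq hd hy]
  · refine (hxy.transcendental 0).pow two_pos ?_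
    have hx₀ : x ≠ 0 := hxy.ne_zero 0
    rw [h, AlgHom.one_apply, eq_div_iff hx₀, ← pow_two] at hx
    exact hx ▸ isAlgebraic_algebraMap c

theorem pow_four_eq_one_and_sq_ne_one_of_monomial (hxy : AlgebraicIndependent K ![x, y])
    (htop : IntermediateField.adjoin K {x, y} = ⊤) {α β : K} {i j : ℤ} (hα : α ≠ 0) (hβ : β ≠ 0)
    (hij : i * j = 2) (hΦx : Φ x = x⁻¹ * (algebraMap K F α * y ^ i)) (hΦy : Φ y = y)
    (hΨx : Ψ x = x) (hΨy : Ψ y = y⁻¹ * (algebraMap K F β * x ^ j)) :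
    (Φ * Ψ) ^ 4 = 1 ∧ (Φ * Ψ) ^ 2 ≠ 1 := by
  have hx : x ≠ 0 := hxy.ne_zero 0
  have hy : y ≠ 0 := hxy.ne_zero 1
  have hα' : algebraMap K F α ≠ 0 := (map_ne_zero _).2 hα
  have hβ' : algebraMap K F β ≠ 0 := (map_ne_zero _).2 hβ
  have hgx : (Φ * Ψ) x = x⁻¹ * (algebraMap K F α * y ^ i) := (congrArg Φ hΨx).trans hΦx
  have hgy : (Φ * Ψ) y = algebraMap K F (α ^ j * β) * (y * (x ^ j)⁻¹) := by
    simp only [AlgHom.mul_apply, hΨy, map_mul, map_inv₀, map_zpow₀, AlgHom.commutes, hΦx, hΦy,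
      mul_zpow, inv_zpow, ← zpow_mul, hij]
    field_simp
  refine pow_four_eq_one_and_sq_ne_one_of_sq_apply_eq_div hxy htop (c := α ^ 2 * β ^ i)
    (d := α ^ j * β ^ 2) (mul_ne_zero (pow_ne_zero _ hα) (zpow_ne_zero _ hβ))
    (mul_ne_zero (zpow_ne_zero _ hα) (pow_ne_zero _ hβ)) ?_ ?_
  · rw [pow_two, AlgHom.mul_apply, hgx]
    simp only [map_mul, map_inv₀, map_zpow₀, map_pow, AlgHom.commutes, hgx, hgy, mul_zpow,
      inv_zpow, ← zpow_mul, (mul_comm j i).trans hij]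
    field_simp
  · rw [pow_two, AlgHom.mul_apply, hgy]
    simp only [map_mul, map_inv₀, map_zpow₀, map_pow, AlgHom.commutes, hgx, hgy, mul_zpow,
      inv_zpow, ← zpow_mul, hij]
    field_simp

end FieldExtension

namespace Biquadratic

open Matrix

/-- The vector of monomials at which coefficient vectors of quadratic polynomials are evaluated. -/
def powVec {R : Type*} [CommSemiring R] (z : R) : Fin 3 → R := ![1, z, z ^ 2]

theorem powVec_dotProduct {R : Type*} [CommSemiring R] (z : R) (c : Fin 3 → R) :
    powVec z ⬝ᵥ c = c 0 + c 1 * z + c 2 * z ^ 2 := by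
  simp only [powVec, vec3_dotProduct, cons_val]; ring

theorem map_powVec {R S : Type*} [CommSemiring R] [CommSemiring S] (f : R →+* S) (z : R) :
    f ∘ powVec z = powVec (f z) := by
  ext i; fin_cases i <;> simp [powVec]

/-- The coefficient vector of the monic quadratic polynomial with roots `r` and `s`. -/
def rootVec {R : Type*} [CommRing R] (r s : R) : Fin 3 → R := ![r * s, -(r + s), 1]

theorem eq_smul_rootVec {R : Type*} [CommRing R] [IsDomain R] {c : Fin 3 → R} {r s : R}
    (hrs : r ≠ s) (hr : powVec r ⬝ᵥ c = 0) (hs : powVec s ⬝ᵥ c = 0) : c = c 2 • rootVec r s := by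
  rw [powVec_dotProduct] at hr hs
  have hc₁ : c 1 + c 2 * (r + s) = 0 :=
    mul_left_cancel₀ (sub_ne_zero.2 hrs) (by linear_combination hr - hs)
  have hc₀ : c 0 = c 2 * (r * s) := by linear_combination hr - r * hc₁
  ext i
  fin_cases i
  exacts [hc₀, eq_neg_of_add_eq_zero_left hc₁ |>.trans (mul_neg _ _).symm, (mul_one _).symm]

theorem powVec_dotProduct_smul_rootVec {R : Type*} [CommRing R] (u r s k : R) :
    powVec u ⬝ᵥ k • rootVec r s = k * ((u - r) * (u - s)) := by
  simp only [powVec_dotProduct, rootVec, Pi.smul_apply, smul_eq_mul, cons_val]; ring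

section Ring

variable {R : Type*} [CommRing R]

/-- The biquadratic polynomial whose coefficient of `x ^ i * y ^ j` is `M i j`. -/
def eval (M : Matrix (Fin 3) (Fin 3) R) (x y : R) : R := powVec x ⬝ᵥ M *ᵥ powVec y

theorem eval_eq_sum (M : Matrix (Fin 3) (Fin 3) R) (x y : R) : eval M x y =
    M 0 0 + M 1 0 * x + M 2 0 * x ^ 2 + (M 0 1 + M 1 1 * x + M 2 1 * x ^ 2) * y +
      (M 0 2 + M 1 2 * x + M 2 2 * x ^ 2) * y ^ 2 := by
  simp only [eval, powVec, mulVec, vec3_dotProduct, cons_val]; ring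

theorem eval_transpose (M : Matrix (Fin 3) (Fin 3) R) (x y : R) : eval Mᵀ x y = eval M y x := by
  rw [eval, eval, mulVec_transpose, dotProduct_comm, dotProduct_mulVec]

theorem map_eval {S : Type*} [CommRing S] (f : R →+* S) (M : Matrix (Fin 3) (Fin 3) R) (x y : R) :
    f (eval M x y) = eval (M.map f) (f x) (f y) := by
  rw [eval, eval, RingHom.map_dotProduct, map_powVec, ← map_powVec f y]
  congr 1
  exact funext fun i => RingHom.map_mulVec f M (powVec y) i

variable (M : Matrix (Fin 3) (Fin 3) R)

/-- The quadratic invariant of a biquadratic polynomial under Möbius substitutions in `x` and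
in `y`. -/
def quadInv : R :=
  M 1 1 ^ 2 - 4 * M 1 0 * M 1 2 - 4 * M 0 1 * M 2 1 + 8 * (M 0 0 * M 2 2 + M 0 2 * M 2 0)

/-- The quartic invariant of a biquadratic polynomial under Möbius substitutions in `x` and
in `y`. -/
def quartInv : R :=
  2 * (M 0 0 * M 2 2 - M 0 2 * M 2 0) ^ 2 -
    2 * ((M 1 0 * M 2 2 - M 2 0 * M 1 2) * (M 0 0 * M 1 2 - M 1 0 * M 0 2) +
      (M 0 0 * M 2 1 - M 2 0 * M 0 1) * (M 0 1 * M 2 2 - M 2 1 * M 0 2)) +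
    (M 1 1 * M 2 2 - M 2 1 * M 1 2) * (M 0 0 * M 1 1 - M 1 0 * M 0 1) +
    (M 1 0 * M 2 1 - M 2 0 * M 1 1) * (M 0 1 * M 1 2 - M 1 1 * M 0 2)

/-- Cayley's condition for closed paths of eight edges on the curve `eval M x y = 0`. For
`D = M.det ≠ 0`, its vanishing says that the tangent at `(0, D / 2)` to the cubic
`Y ^ 2 = X ^ 3 + quadInv M / 4 * X ^ 2 + quartInv M / 2 * X + D ^ 2 / 4` meets the cubic again on
the line `Y = 0`, so that `(0, D / 2)` is a point of order four. -/
def cayley : R :=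
  quartInv M ^ 3 - quadInv M * quartInv M * M.det ^ 2 + 4 * M.det ^ 4

theorem map_quadInv {S : Type*} [CommRing S] (f : R →+* S) :
    f (quadInv M) = quadInv (M.map f) := by
  simp only [quadInv, map_apply, map_add, map_sub, map_mul, map_pow, map_ofNat]

theorem map_quartInv {S : Type*} [CommRing S] (f : R →+* S) :
    f (quartInv M) = quartInv (M.map f) := by
  simp only [quartInv, map_apply, map_add, map_sub, map_mul, map_pow, map_ofNat]

theorem map_cayley {S : Type*} [CommRing S] (f : R →+* S) : f (cayley M) = cayley (M.map f) := by
  simp only [cayley, map_add, map_sub, map_mul, map_pow, map_ofNat, map_quadInv, map_quartInv,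
    RingHom.map_det, RingHom.mapMatrix_apply]

theorem quadInv_transpose : quadInv Mᵀ = quadInv M := by
  simp only [quadInv, transpose_apply]; ring

theorem quartInv_transpose : quartInv Mᵀ = quartInv M := by
  simp only [quartInv, transpose_apply]; ring

theorem cayley_transpose : cayley Mᵀ = cayley M := by
  rw [cayley, cayley, quadInv_transpose, quartInv_transpose, det_transpose]

/-- Left multiplication by this matrix rewrites a biquadratic polynomial in the coordinate
`X = (x - q) / (x - p)`, that is `x = (q - p * X) / (1 - X)`, clearing denominators by
`(1 - X) ^ 2`. -/
def mobius (p q : R) : Matrix (Fin 3) (Fin 3) R :=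
  !![1, q, q ^ 2; -2, -(p + q), -(2 * (p * q)); 1, p, p ^ 2]

theorem det_mobius (p q : R) : (mobius p q).det = (q - p) ^ 3 := by
  simp only [mobius, det_fin_three, of_apply, cons_val]; ring

theorem quadInv_mobius_mul (p q : R) : quadInv (mobius p q * M) = (q - p) ^ 2 * quadInv M := by
  simp only [quadInv, mobius, mul_apply, Fin.sum_univ_three, of_apply, cons_val]; ring

theorem quartInv_mobius_mul (p q : R) : quartInv (mobius p q * M) = (q - p) ^ 4 * quartInv M := by
  simp only [quartInv, mobius, mul_apply, Fin.sum_univ_three, of_apply, cons_val]; ring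

theorem cayley_mobius_mul (p q : R) : cayley (mobius p q * M) = (q - p) ^ 12 * cayley M := by
  rw [cayley, cayley, quadInv_mobius_mul, quartInv_mobius_mul, det_mul, det_mobius]; ring

end Ring

section Field

variable {F : Type*} [Field F]

theorem transpose_mobius_mulVec_powVec {p q x : F} (hx : x ≠ p) :
    (mobius p q)ᵀ *ᵥ powVec ((x - q) / (x - p)) = ((p - q) / (x - p)) ^ 2 • powVec x := by
  have h : x - p ≠ 0 := sub_ne_zero.2 hx
  ext i
  fin_cases i <;>
    simp [mobius, powVec, mulVec] <;> field_simp <;> ring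

theorem row_mobius_zero (p q : F) : (mobius p q).row 0 = powVec q := by
  ext i; fin_cases i <;> simp [mobius, powVec]

theorem row_mobius_two (p q : F) : (mobius p q).row 2 = powVec p := by
  ext i; fin_cases i <;> simp [mobius, powVec]

variable {N : Matrix (Fin 3) (Fin 3) F}

theorem root_of_eval_eq_zero {x y : F} (hy : y ≠ 0) (h00 : N 0 0 = 0) (h22 : N 2 2 = 0)
    (h20 : N 2 0 ≠ 0) (ex : N 1 0 + N 2 0 * x = 0) (ey : N 2 0 + N 2 1 * y = 0)
    (e : eval N x y = 0) :
    (N 2 1 * N 1 0 / N 2 0) ^ 2 - N 1 1 * (N 2 1 * N 1 0 / N 2 0) +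
      (N 2 1 * N 0 1 + N 1 0 * N 1 2 - N 2 0 * N 0 2) = 0 := by
  rw [eval_eq_sum, h00, h22] at e
  have hx : N 2 1 * N 1 0 / N 2 0 = -(N 2 1 * x) := by
    field_simp
    linear_combination N 2 1 * ex
  have h : N 0 1 + N 1 1 * x + N 2 1 * x ^ 2 + (N 0 2 + N 1 2 * x) * y = 0 :=
    mul_left_cancel₀ hy (by linear_combination e - x * ex)
  rw [hx]
  linear_combination N 2 1 * h - (N 0 2 + N 1 2 * x) * ey + N 1 2 * ex

theorem cayley_eq_zero_of_root {z : F} (h00 : N 0 0 = 0) (h22 : N 2 2 = 0)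
    (h₁ : N 2 1 * N 1 0 = z * N 2 0) (h₂ : N 1 2 * N 0 1 = z * N 0 2)
    (hz : z ^ 2 - N 1 1 * z + (N 2 1 * N 0 1 + N 1 0 * N 1 2 - N 2 0 * N 0 2) = 0) :
    cayley N = 0 := by
  have hdet : N.det = N 2 0 * N 0 2 * (2 * z - N 1 1) := by
    rw [det_fin_three, h00, h22]; linear_combination N 0 2 * h₁ + N 2 0 * h₂
  have hquad : quadInv N = (2 * z - N 1 1) ^ 2 + 4 * (N 2 0 * N 0 2) := by
    rw [quadInv, h00, h22]; linear_combination -4 * hz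
  have hquart : quartInv N = N 2 0 * N 0 2 * (2 * z - N 1 1) ^ 2 := by
    rw [quartInv, h00, h22]
    linear_combination (2 * N 1 2 * N 0 1 - N 1 1 * N 0 2) * h₁ +
      (2 * z * N 2 0 - N 2 0 * N 1 1) * h₂ - 2 * (N 2 0 * N 0 2) * hz
  rw [cayley, hdet, hquad, hquart]; ring

theorem cayley_eq_zero_of_normalized {x₁ y₁ x₃ y₃ : F} (hx₁ : x₁ ≠ 0) (hy₃ : y₃ ≠ 0)
    (h00 : N 0 0 = 0) (h22 : N 2 2 = 0) (h20 : N 2 0 ≠ 0) (h02 : N 0 2 ≠ 0) (hdet : N.det ≠ 0)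
    (ex₁ : N 0 2 + N 1 2 * x₁ = 0) (ey₁ : N 0 1 + N 0 2 * y₁ = 0) (e₁ : eval N x₁ y₁ = 0)
    (ex₃ : N 1 0 + N 2 0 * x₃ = 0) (ey₃ : N 2 0 + N 2 1 * y₃ = 0) (e₃ : eval N x₃ y₃ = 0) :
    cayley N = 0 := by
  have hz := root_of_eval_eq_zero hy₃ h00 h22 h20 ex₃ ey₃ e₃
  have hz' := root_of_eval_eq_zero (N := Nᵀ) hx₁ h00 h22 h02 ey₁ ex₁
    ((eval_transpose N y₁ x₁).trans e₁)
  simp only [transpose_apply] at hz'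
  generalize hzdef : N 2 1 * N 1 0 / N 2 0 = z at hz
  generalize hzdef' : N 1 2 * N 0 1 / N 0 2 = z' at hz'
  rw [div_eq_iff h20] at hzdef
  rw [div_eq_iff h02] at hzdef'
  have hsum : z + z' - N 1 1 ≠ 0 := fun h => hdet <| by
    rw [det_fin_three, h00, h22]
    linear_combination N 0 2 * hzdef + N 2 0 * hzdef' + N 2 0 * N 0 2 * h
  have hzz' : z = z' := by
    refine sub_eq_zero.1 ((mul_eq_zero.1 ?_).resolve_right hsum)
    linear_combination hz - hz'
  subst hzz'
  exact cayley_eq_zero_of_root h00 h22 hzdef hzdef' hz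

section Normalize

variable (M : Matrix (Fin 3) (Fin 3) F)

/-- The polynomial `M` in the coordinates `(x - q) / (x - p)` and `(y - q') / (y - p')`, which send
`(p, p')` to `(∞, ∞)` and `(q, q')` to `(0, 0)`. -/
def normalize (p q p' q' : F) : Matrix (Fin 3) (Fin 3) F :=
  mobius p q * M * (mobius p' q')ᵀ

variable (p q p' q' : F)

theorem dotProduct_normalize_mulVec (u v : Fin 3 → F) :
    u ⬝ᵥ normalize M p q p' q' *ᵥ v = ((mobius p q)ᵀ *ᵥ u) ⬝ᵥ M *ᵥ ((mobius p' q')ᵀ *ᵥ v) := by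
  rw [normalize, mulVec_transpose, ← dotProduct_mulVec, mulVec_mulVec, mulVec_mulVec,
    Matrix.mul_assoc]

theorem transpose_normalize : (normalize M p q p' q')ᵀ = normalize Mᵀ p' q' p q := by
  simp only [normalize, transpose_mul, transpose_transpose, Matrix.mul_assoc]

theorem cayley_normalize :
    cayley (normalize M p q p' q') = (q' - p') ^ 12 * ((q - p) ^ 12 * cayley M) := by
  rw [normalize, ← cayley_transpose, transpose_mul, transpose_transpose, cayley_mobius_mul,
    cayley_transpose, cayley_mobius_mul]

theorem det_normalize :
    (normalize M p q p' q').det = (q - p) ^ 3 * M.det * (q' - p') ^ 3 := by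
  rw [normalize, det_mul, det_mul, det_transpose, det_mobius, det_mobius]

theorem normalize_apply_zero_zero : normalize M p q p' q' 0 0 = eval M q q' := by
  simpa [row_mobius_zero, eval] using
    dotProduct_normalize_mulVec M p q p' q' (Pi.single 0 1) (Pi.single 0 1)

theorem normalize_apply_two_two : normalize M p q p' q' 2 2 = eval M p p' := by
  simpa [row_mobius_two, eval] using
    dotProduct_normalize_mulVec M p q p' q' (Pi.single 2 1) (Pi.single 2 1)

theorem normalize_apply_two_zero : normalize M p q p' q' 2 0 = eval M p q' := by
  simpa [row_mobius_zero, row_mobius_two, eval] using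
    dotProduct_normalize_mulVec M p q p' q' (Pi.single 2 1) (Pi.single 0 1)

theorem normalize_apply_zero_two : normalize M p q p' q' 0 2 = eval M q p' := by
  simpa [row_mobius_zero, row_mobius_two, eval] using
    dotProduct_normalize_mulVec M p q p' q' (Pi.single 0 1) (Pi.single 2 1)

variable {M p q p' q'} {x y : F}

theorem eval_normalize (hx : x ≠ p) (hy : y ≠ p') (h : eval M x y = 0) :
    eval (normalize M p q p' q') ((x - q) / (x - p)) ((y - q') / (y - p')) = 0 := by
  rw [eval, dotProduct_normalize_mulVec, transpose_mobius_mulVec_powVec hx,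
    transpose_mobius_mulVec_powVec hy, mulVec_smul, smul_dotProduct, dotProduct_smul, ← eval, h,
    smul_zero, smul_zero]

theorem normalize_left_of_eval_eq_zero (hx : x ≠ p) (h : eval M x p' = 0) (hp : eval M p p' = 0) :
    normalize M p q p' q' 0 2 + normalize M p q p' q' 1 2 * ((x - q) / (x - p)) = 0 := by
  have := dotProduct_normalize_mulVec M p q p' q' (powVec ((x - q) / (x - p))) (Pi.single 2 1)
  rw [transpose_mobius_mulVec_powVec hx, mulVec_single_one, mulVec_single_one, col_transpose,
    row_mobius_two, smul_dotProduct, ← eval, h, smul_zero, powVec_dotProduct] at this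
  simpa [normalize_apply_two_two, hp] using this

theorem normalize_right_of_eval_eq_zero (hx : x ≠ p) (hxq : x ≠ q) (h : eval M x q' = 0)
    (hq : eval M q q' = 0) :
    normalize M p q p' q' 1 0 + normalize M p q p' q' 2 0 * ((x - q) / (x - p)) = 0 := by
  have := dotProduct_normalize_mulVec M p q p' q' (powVec ((x - q) / (x - p))) (Pi.single 0 1)
  rw [transpose_mobius_mulVec_powVec hx, mulVec_single_one, mulVec_single_one, col_transpose,
    row_mobius_zero, smul_dotProduct, ← eval, h, smul_zero, powVec_dotProduct] at this
  have hX : (x - q) / (x - p) ≠ 0 := div_ne_zero (sub_ne_zero.2 hxq) (sub_ne_zero.2 hx)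
  refine mul_left_cancel₀ hX ?_
  simp only [col_apply, normalize_apply_zero_zero, hq] at this
  linear_combination this

end Normalize

/-- A closed path `x 0, y 0, x 1, y 1, x 2, y 2, x 3, y 3, x 0` along the curve `eval M x y = 0`,
whose horizontal and vertical edges are two-point fibres of the coordinate functions. -/
structure IsQuadrilateral (M : Matrix (Fin 3) (Fin 3) F) (x y : Fin 4 → F) : Prop where
  injective_left : Function.Injective x
  injective_right : Function.Injective y
  eval_eq_zero_iff : ∀ i u, eval M u (y i) = 0 ↔ u = x i ∨ u = x (i + 1)

namespace IsQuadrilateral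

variable {M : Matrix (Fin 3) (Fin 3) F} {x y : Fin 4 → F}

theorem exists_mulVec_powVec_eq_smul (h : IsQuadrilateral M x y) (i : Fin 4) :
    ∃ k : F, k ≠ 0 ∧ M *ᵥ powVec (y i) = k • rootVec (x i) (x (i + 1)) := by
  have hne : x i ≠ x (i + 1) := h.injective_left.ne (by fin_cases i <;> decide)
  have heq := eq_smul_rootVec hne ((h.eval_eq_zero_iff i _).2 (.inl rfl))
    ((h.eval_eq_zero_iff i _).2 (.inr rfl))
  refine ⟨_, fun h₀ => ?_, heq⟩
  have h₂ : eval M (x (i + 2)) (y i) = 0 := by rw [eval, heq, h₀, zero_smul, dotProduct_zero]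
  rcases (h.eval_eq_zero_iff i _).1 h₂ with hu | hu <;>
    exact absurd hu (h.injective_left.ne (by fin_cases i <;> decide))

theorem det_ne_zero (h : IsQuadrilateral M x y) : M.det ≠ 0 := by
  rw [Ne, ← exists_vecMul_eq_zero_iff]
  rintro ⟨w, hw, hwM⟩
  have polar (i j : Fin 4) (hij : i + 1 = j) : w 0 * (x i * x j) - w 1 * (x i + x j) + w 2 = 0 := by
    obtain ⟨k, hk, hcol⟩ := h.exists_mulVec_powVec_eq_smul i
    have hroot : k * (w ⬝ᵥ rootVec (x i) (x j)) = 0 := by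
      rw [← smul_eq_mul, ← dotProduct_smul, ← hij, ← hcol, dotProduct_mulVec, hwM, zero_dotProduct]
    have := (mul_eq_zero.1 hroot).resolve_left hk
    simp only [rootVec, vec3_dotProduct, cons_val] at this
    linear_combination this
  have hx {i j : Fin 4} (hij : i ≠ j) : x i - x j ≠ 0 := sub_ne_zero.2 (h.injective_left.ne hij)
  have h₁ : w 0 * x 1 - w 1 = 0 :=
    mul_left_cancel₀ (hx (i := 0) (j := 2) (by decide))
      (by linear_combination polar 0 1 rfl - polar 1 2 rfl)
  have h₂ : w 0 * x 2 - w 1 = 0 :=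
    mul_left_cancel₀ (hx (i := 1) (j := 3) (by decide))
      (by linear_combination polar 1 2 rfl - polar 2 3 rfl)
  have hw₀ : w 0 = 0 :=
    mul_left_cancel₀ (hx (i := 1) (j := 2) (by decide)) (by linear_combination h₁ - h₂)
  have hw₁ : w 1 = 0 := by simpa [hw₀] using h₁
  have hw₂ : w 2 = 0 := by simpa [hw₀, hw₁] using polar 0 1 rfl
  exact hw (by ext i; fin_cases i <;> assumption)

theorem cayley_eq_zero (h : IsQuadrilateral M x y) : cayley M = 0 := by
  have hx {i j : Fin 4} (hij : i ≠ j := by decide) : x i ≠ x j := h.injective_left.ne hij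
  have hy {i j : Fin 4} (hij : i ≠ j := by decide) : y i ≠ y j := h.injective_right.ne hij
  have on (i : Fin 4) : eval M (x i) (y i) = 0 := (h.eval_eq_zero_iff i _).2 (.inl rfl)
  have on' (i : Fin 4) : eval M (x (i + 1)) (y i) = 0 := (h.eval_eq_zero_iff i _).2 (.inr rfl)
  have off (i : Fin 4) : eval M (x (i + 2)) (y i) ≠ 0 := fun h₀ =>
    ((h.eval_eq_zero_iff i _).1 h₀).elim (hx (by fin_cases i <;> decide))
      (hx (by fin_cases i <;> decide))
  have onT (i : Fin 4) : eval Mᵀ (y i) (x i) = 0 := (eval_transpose M _ _).trans (on i)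
  have onT' (i : Fin 4) : eval Mᵀ (y i) (x (i + 1)) = 0 := (eval_transpose M _ _).trans (on' i)
  have x10 : x 1 ≠ x 0 := hx
  have x12 : x 1 ≠ x 2 := hx
  have x30 : x 3 ≠ x 0 := hx
  have x32 : x 3 ≠ x 2 := hx
  have y10 : y 1 ≠ y 0 := hy
  have y12 : y 1 ≠ y 2 := hy
  have y30 : y 3 ≠ y 0 := hy
  have y32 : y 3 ≠ y 2 := hy
  have hdet : (normalize M (x 0) (x 2) (y 0) (y 2)).det ≠ 0 := by
    rw [det_normalize]
    exact mul_ne_zero (mul_ne_zero (pow_ne_zero _ (sub_ne_zero.2 hx)) h.det_ne_zero)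
      (pow_ne_zero _ (sub_ne_zero.2 hy))
  have hey₁ := normalize_right_of_eval_eq_zero (p := y 0) (p' := x 0) y10 y12 (onT' 1) (onT 2)
  have hey₃ := normalize_left_of_eval_eq_zero (q := y 2) (q' := x 2) y30 (onT' 3) (onT 0)
  rw [← transpose_normalize] at hey₁ hey₃
  have hnorm := cayley_eq_zero_of_normalized
    (div_ne_zero (sub_ne_zero.2 x12) (sub_ne_zero.2 x10))
    (div_ne_zero (sub_ne_zero.2 y32) (sub_ne_zero.2 y30))
    ((normalize_apply_zero_zero ..).trans (on 2)) ((normalize_apply_two_two ..).trans (on 0))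
    ((normalize_apply_two_zero ..).trans_ne (off 2))
    ((normalize_apply_zero_two ..).trans_ne (off 0)) hdet
    (normalize_left_of_eval_eq_zero x10 (on' 0) (on 0)) hey₁
    (eval_normalize x10 y10 (on 1)) (normalize_right_of_eval_eq_zero x30 x32 (on' 2) (on 2))
    hey₃ (eval_normalize x30 y30 (on 3))
  rw [cayley_normalize] at hnorm
  simpa [sub_eq_zero, h.injective_left.eq_iff, h.injective_right.eq_iff] using hnorm

end IsQuadrilateral

end Field

section Kernel

variable {K A B : Type*} [CommRing K] [CommRing A] [Algebra K A] [CommRing B] [Algebra K B]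

/-- The kernel of the model with step matrix `M`, in which a parameter `s` replaces the centre entry
of `M`. It is the polynomial `x * y * (1 - t * S(x, y))`, with `S` the step polynomial, divided by
`-t`; the parameter is `s = -1 / t`. -/
def kernel (M : Matrix (Fin 3) (Fin 3) K) (s : A) : Matrix (Fin 3) (Fin 3) A :=
  !![algebraMap K A (M 0 0), algebraMap K A (M 0 1), algebraMap K A (M 0 2);
    algebraMap K A (M 1 0), s, algebraMap K A (M 1 2);
    algebraMap K A (M 2 0), algebraMap K A (M 2 1), algebraMap K A (M 2 2)]

theorem transpose_kernel (M : Matrix (Fin 3) (Fin 3) K) (s : A) :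
    (kernel M s)ᵀ = kernel Mᵀ s := by
  ext i j; fin_cases i <;> fin_cases j <;> rfl

theorem map_kernel (M : Matrix (Fin 3) (Fin 3) K) (s : A) (f : A →ₐ[K] B) :
    (kernel M s).map f = kernel M (f s) := by
  ext i j; fin_cases i <;> fin_cases j <;> simp [kernel]

theorem map_eval_kernel (M : Matrix (Fin 3) (Fin 3) K) (s u v : A) (f : A →ₐ[K] B) :
    f (eval (kernel M s) u v) = eval (kernel M (f s)) (f u) (f v) :=
  (map_eval (f : A →+* B) _ u v).trans (congrArg (eval · (f u) (f v)) (map_kernel M s f))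

end Kernel

section Involution

variable {K F : Type*} [Field K] [Field F] [Algebra K F] {x y : F}

theorem eval_map_algebraMap_ne_zero (hxy : AlgebraicIndependent K ![x, y])
    {A : Matrix (Fin 3) (Fin 3) K} (hA : A ≠ 0) : eval (A.map (algebraMap K F)) x y ≠ 0 := by
  intro h
  have hinj : Function.Injective fun p : Fin 3 × Fin 3 => ((p.1 : ℕ), (p.2 : ℕ)) :=
    Fin.val_injective.prodMap Fin.val_injective
  have hlin := Fintype.linearIndependent_iff.1 ((linearIndependent_pow_mul_pow hxy).comp _ hinj)
    (fun p => A p.1 p.2) (by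
      rw [← h, eval_eq_sum]
      simp only [Fintype.sum_prod_type, Fin.sum_univ_three, Algebra.smul_def, Function.comp_apply,
        map_apply, Fin.val_zero, Fin.val_one, Fin.val_two]
      ring)
  exact hA (Matrix.ext fun i j => hlin (i, j))

/-- The value at `y` of the polynomial whose coefficients form the `i`-th row of `M`, that is, the
coefficient of `x ^ i` in the biquadratic polynomial of `M`. -/
def rowEval (M : Matrix (Fin 3) (Fin 3) K) (i : Fin 3) (y : F) : F :=
  powVec y ⬝ᵥ (algebraMap K F ∘ M i)

theorem rowEval_eq_sum (M : Matrix (Fin 3) (Fin 3) K) (i : Fin 3) (y : F) : rowEval M i y =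
    algebraMap K F (M i 0) + algebraMap K F (M i 1) * y + algebraMap K F (M i 2) * y ^ 2 :=
  powVec_dotProduct y _

theorem ne_zero_of_rowEval_ne_zero {M : Matrix (Fin 3) (Fin 3) K} {i : Fin 3}
    (hi : rowEval M i y ≠ 0) : M i ≠ 0 := fun h => hi (by simp [rowEval_eq_sum, h])

theorem transcendental_of_eval_kernel_eq_zero (hxy : AlgebraicIndependent K ![x, y])
    {M : Matrix (Fin 3) (Fin 3) K} (hM : M 2 ≠ 0) {s : F} (hs : eval (kernel M s) x y = 0) :
    Transcendental K s := by
  intro halg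
  lift s to algebraicClosure K F using mem_algebraicClosure_iff.2 halg
  have hA : kernel M s ≠ 0 := fun h => hM <| funext fun j => by
    have := congrFun (congrFun h 2) j
    fin_cases j <;> simpa [kernel] using this
  refine eval_map_algebraMap_ne_zero hxy.algebraicClosure hA ?_
  convert hs using 2
  exact map_kernel M s (algebraicClosure K F).val

variable (M : Matrix (Fin 3) (Fin 3) K)

theorem kernel_mulVec_powVec_zero (s y : F) : (kernel M s *ᵥ powVec y) 0 = rowEval M 0 y :=
  dotProduct_comm _ _

theorem kernel_mulVec_powVec_one (s y : F) : (kernel M s *ᵥ powVec y) 1 =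
    algebraMap K F (M 1 0) + s * y + algebraMap K F (M 1 2) * y ^ 2 :=
  (dotProduct_comm _ _).trans (powVec_dotProduct y _)

theorem kernel_mulVec_powVec_two (s y : F) : (kernel M s *ᵥ powVec y) 2 = rowEval M 2 y :=
  dotProduct_comm _ _

theorem exists_eval_kernel_eq_zero (hx : x ≠ 0) (hy : y ≠ 0) :
    ∃ s : F, eval (kernel M s) x y = 0 := by
  refine ⟨-eval (kernel M (0 : F)) x y / (x * y), ?_⟩
  have h (s : F) : eval (kernel M s) x y = eval (kernel M (0 : F)) x y + s * (x * y) := by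
    simp only [eval_eq_sum, kernel, of_apply, cons_val]; ring
  rw [h, div_mul_cancel₀ _ (mul_ne_zero hx hy), add_neg_cancel]

/-- The map `Φ` fixes `y` and sends `x` to the second root of the biquadratic polynomial of `M`,
seen as a quadratic polynomial in `x`; the product of the two roots does not involve the row
`M 1`. -/
structure IsVietaInvolution (x y : F) (Φ : F →ₐ[K] F) : Prop where
  map_snd : Φ y = y
  map_fst : Φ x = x⁻¹ * (rowEval M 0 y / rowEval M 2 y)

namespace IsVietaInvolution

variable {M} {Φ : F →ₐ[K] F}

theorem rowEval_zero_ne_zero (hΦ : IsVietaInvolution M x y Φ) (hx : x ≠ 0) :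
    rowEval M 0 y ≠ 0 := fun h =>
  (map_ne_zero Φ).2 hx (by rw [hΦ.map_fst, h, zero_div, mul_zero])

theorem rowEval_two_ne_zero (hΦ : IsVietaInvolution M x y Φ) (hx : x ≠ 0) :
    rowEval M 2 y ≠ 0 := fun h =>
  (map_ne_zero Φ).2 hx (by rw [hΦ.map_fst, h, div_zero, mul_zero])

theorem map_rowEval (hΦ : IsVietaInvolution M x y Φ) (i : Fin 3) :
    Φ (rowEval M i y) = rowEval M i y := by
  simp only [rowEval_eq_sum, map_add, map_mul, map_pow, AlgHom.commutes, hΦ.map_snd]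

theorem map_map_fst (hΦ : IsVietaInvolution M x y Φ) (hx : x ≠ 0) : Φ (Φ x) = x := by
  have hn := hΦ.rowEval_zero_ne_zero hx
  have hd := hΦ.rowEval_two_ne_zero hx
  rw [hΦ.map_fst, map_mul, map_inv₀, map_div₀, hΦ.map_rowEval, hΦ.map_rowEval, hΦ.map_fst]
  field_simp

theorem map_fst_ne (hΦ : IsVietaInvolution M x y Φ) (hxy : AlgebraicIndependent K ![x, y]) :
    Φ x ≠ x := by
  have hx : x ≠ 0 := hxy.ne_zero 0
  have hd := hΦ.rowEval_two_ne_zero hx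
  intro h
  have hA : of ![-M 0, 0, M 2] ≠ 0 := fun h => ne_zero_of_rowEval_ne_zero hd (congrFun h 2)
  refine eval_map_algebraMap_ne_zero hxy hA ?_
  rw [hΦ.map_fst, ← div_eq_inv_mul, div_eq_iff hx, div_eq_iff hd, rowEval_eq_sum,
    rowEval_eq_sum] at h
  simp only [eval_eq_sum, map_apply, of_apply, cons_val, Pi.neg_apply, Pi.zero_apply, map_neg,
    map_zero]
  linear_combination -h

theorem kernel_mulVec_powVec (hΦ : IsVietaInvolution M x y Φ) (hx : x ≠ 0) {s : F}
    (hs : eval (kernel M s) x y = 0) :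
    kernel M s *ᵥ powVec y = rowEval M 2 y • rootVec x (Φ x) := by
  have hd := hΦ.rowEval_two_ne_zero hx
  have hprod : rowEval M 0 y = rowEval M 2 y * (x * Φ x) := by rw [hΦ.map_fst]; field_simp
  rw [eval, powVec_dotProduct, kernel_mulVec_powVec_zero, kernel_mulVec_powVec_two, hprod] at hs
  have hsum : (kernel M s *ᵥ powVec y) 1 = rowEval M 2 y * -(x + Φ x) :=
    mul_left_cancel₀ hx (by linear_combination hs)
  ext i
  fin_cases i
  exacts [(kernel_mulVec_powVec_zero M s y).trans hprod, hsum,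
    (kernel_mulVec_powVec_two M s y).trans (mul_one _).symm]

theorem eval_kernel_eq_zero_iff (hΦ : IsVietaInvolution M x y Φ) (hx : x ≠ 0) {s : F}
    (hs : eval (kernel M s) x y = 0) (u : F) :
    eval (kernel M s) u y = 0 ↔ u = x ∨ u = Φ x := by
  rw [eval, hΦ.kernel_mulVec_powVec hx hs, powVec_dotProduct_smul_rootVec, mul_eq_zero,
    or_iff_right (hΦ.rowEval_two_ne_zero hx), mul_eq_zero, sub_eq_zero, sub_eq_zero]

theorem map_kernel_parameter (hΦ : IsVietaInvolution M x y Φ) (hx : x ≠ 0) (hy : y ≠ 0) {s : F}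
    (hs : eval (kernel M s) x y = 0) : Φ s = s := by
  have hsum := congrFun (hΦ.kernel_mulVec_powVec hx hs) 1
  rw [kernel_mulVec_powVec_one] at hsum
  simp only [Pi.smul_apply, smul_eq_mul, rootVec, cons_val] at hsum
  have hmap := congrArg Φ hsum
  simp only [map_add, map_mul, map_neg, map_pow, AlgHom.commutes, hΦ.map_snd, hΦ.map_rowEval,
    hΦ.map_map_fst hx] at hmap
  exact mul_right_cancel₀ hy (by linear_combination hmap - hsum)

end IsVietaInvolution

end Involution

section Orbit

variable {K F : Type*} [Field K] [Field F] [Algebra K F] {x y s : F}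
  {M : Matrix (Fin 3) (Fin 3) K} {Φ Ψ g : F →ₐ[K] F}

theorem map_eval_kernel_of_map_eq (hgs : g s = s) (u v : F) :
    g (eval (kernel M s) u v) = eval (kernel M s) (g u) (g v) := by
  simpa only [hgs] using map_eval_kernel M s u v g

theorem pow_apply_eq_self (hgs : g s = s) (n : ℕ) : (g ^ n) s = s := by
  rw [AlgHom.coe_pow]; exact Function.iterate_fixed hgs n

theorem isQuadrilateral_orbit (h₄ : g ^ 4 = 1) (hx : (g ^ 2) x ≠ x) (hy : (g ^ 2) y ≠ y)
    (hgs : g s = s) (hfib : ∀ u, eval (kernel M s) u y = 0 ↔ u = x ∨ u = g x) :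
    IsQuadrilateral (kernel M s) (fun i => (g ^ (i : ℕ)) x) (fun i => (g ^ (i : ℕ)) y) where
  injective_left := injective_pow_apply_of_pow_four_eq_one h₄ hx
  injective_right := injective_pow_apply_of_pow_four_eq_one h₄ hy
  eval_eq_zero_iff i u := by
    have hsucc : (g ^ ((i + 1 : Fin 4) : ℕ)) x = (g ^ (i : ℕ)) (g x) := by
      rw [← AlgHom.mul_apply, ← pow_succ, pow_eq_pow_mod (i + 1 : ℕ) h₄, Fin.val_add, Fin.val_one]
    obtain ⟨v, rfl⟩ : ∃ v, (g ^ (i : ℕ)) v = u := ⟨(g ^ (4 - i : ℕ)) u, by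
      rw [← AlgHom.mul_apply, ← pow_add, Nat.add_sub_cancel' i.is_lt.le, h₄, AlgHom.one_apply]⟩
    have hinj : Function.Injective (g ^ (i : ℕ)) := (g ^ (i : ℕ)).injective
    rw [← map_eval_kernel_of_map_eq (pow_apply_eq_self hgs _), map_eq_zero, hfib, hsucc,
      hinj.eq_iff, hinj.eq_iff]

theorem sq_eq_one_of_sq_apply_eq (hxy : AlgebraicIndependent K ![x, y])
    (htop : IntermediateField.adjoin K {x, y} = ⊤)
    (hΦ : IsVietaInvolution M x y Φ) (hΨ : IsVietaInvolution Mᵀ y x Ψ)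
    (hs : eval (kernel M s) x y = 0) (hgs : (Φ * Ψ) s = s)
    (h₄ : (Φ * Ψ) ^ 4 = 1) (hfix : ((Φ * Ψ) ^ 2) x = x ∨ ((Φ * Ψ) ^ 2) y = y) :
    (Φ * Ψ) ^ 2 = 1 := by
  set g := Φ * Ψ
  have hs' : eval (kernel Mᵀ s) y x = 0 := by rwa [← transpose_kernel, eval_transpose]
  have hx : x ≠ 0 := hxy.ne_zero 0
  have hy : y ≠ 0 := hxy.ne_zero 1
  have hgx : g x = Φ x := congrArg Φ hΨ.map_snd
  have hgΨy : g (Ψ y) = y := (congrArg Φ (hΨ.map_map_fst hy)).trans hΦ.map_snd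
  have hsqs := pow_apply_eq_self hgs 2
  suffices h : (g ^ 2) x = x ∧ (g ^ 2) y = y from
    algHom_ext_of_adjoin_eq_top htop (by rintro z (rfl | rfl); exacts [h.1, h.2])
  rcases hfix with hfix | hfix
  · refine ⟨hfix, ?_⟩
    have hfib := (hΨ.eval_kernel_eq_zero_iff hy hs' ((g ^ 2) y)).1 (by
      conv_lhs => rw [← hfix, ← map_eval_kernel_of_map_eq hsqs, hs', map_zero])
    refine hfib.resolve_right fun h => hΨ.map_fst_ne (algebraicIndependent_swap hxy) ?_
    have h₃ : (g ^ 3) y = y := by rw [pow_succ', AlgHom.mul_apply, h, hgΨy]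
    have h₁ : g y = y := by
      conv_lhs => rw [← h₃, ← AlgHom.mul_apply, ← pow_succ', h₄, AlgHom.one_apply]
    exact Φ.injective (h₁.trans hΦ.map_snd.symm)
  · refine ⟨?_, hfix⟩
    have hfib := (hΦ.eval_kernel_eq_zero_iff hx hs ((g ^ 2) x)).1 (by
      conv_lhs => rw [← hfix, ← map_eval_kernel_of_map_eq hsqs, hs, map_zero])
    refine hfib.resolve_right fun h => hΦ.map_fst_ne hxy ?_
    rw [← hgx, pow_two, AlgHom.mul_apply] at h
    exact hgx.symm.trans (g.injective h)

theorem exists_transcendental_cayley_kernel_eq_zero (hxy : AlgebraicIndependent K ![x, y])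
    (htop : IntermediateField.adjoin K {x, y} = ⊤)
    (hΦ : IsVietaInvolution M x y Φ) (hΨ : IsVietaInvolution Mᵀ y x Ψ)
    (h₄ : (Φ * Ψ) ^ 4 = 1) (h₂ : (Φ * Ψ) ^ 2 ≠ 1) :
    ∃ s : F, Transcendental K s ∧ (kernel M s).det ≠ 0 ∧ cayley (kernel M s) = 0 := by
  have hx : x ≠ 0 := hxy.ne_zero 0
  have hy : y ≠ 0 := hxy.ne_zero 1
  obtain ⟨s, hs⟩ := exists_eval_kernel_eq_zero M hx hy
  have hs' : eval (kernel Mᵀ s) y x = 0 := by rwa [← transpose_kernel, eval_transpose]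
  have hΦs : Φ s = s := hΦ.map_kernel_parameter hx hy hs
  have hΨs : Ψ s = s := hΨ.map_kernel_parameter hy hx hs'
  have hgs : (Φ * Ψ) s = s := (congrArg Φ hΨs).trans hΦs
  have hgx : (Φ * Ψ) x = Φ x := congrArg Φ hΨ.map_snd
  have hmoved := mt (sq_eq_one_of_sq_apply_eq hxy htop hΦ hΨ hs hgs h₄) h₂
  push Not at hmoved
  have hquad : IsQuadrilateral (kernel M s) _ _ :=
    isQuadrilateral_orbit h₄ hmoved.1 hmoved.2 hgs fun u => by
      rw [hΦ.eval_kernel_eq_zero_iff hx hs, hgx]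
  have hM₂ : M 2 ≠ 0 := ne_zero_of_rowEval_ne_zero (hΦ.rowEval_two_ne_zero hx)
  exact ⟨s, transcendental_of_eval_kernel_eq_zero hxy hM₂ hs, hquad.det_ne_zero,
    hquad.cayley_eq_zero⟩

end Orbit

section Pencil

open Polynomial

variable {K : Type*} [Field K]

theorem dvd_of_dvd_pow_of_natDegree_le_one {d Q : K[X]} (hd₀ : d ≠ 0) (hd : d.natDegree ≤ 1)
    {n : ℕ} (h : d ∣ Q ^ n) : d ∣ Q := by
  rcases Nat.le_one_iff_eq_zero_or_eq_one.1 hd with hd | hd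
  · exact (isUnit_iff_degree_eq_zero.2 ((degree_eq_iff_natDegree_eq hd₀).2 hd)).dvd
  · have hirr := irreducible_of_degree_eq_one ((degree_eq_iff_natDegree_eq hd₀).2 hd)
    exact hirr.prime.dvd_of_dvd_pow h

theorem exists_eq_C_mul_X_of_natDegree_mul_le_one [NeZero (2 : K)] {L : K[X]} {k : K}
    (h₀ : L * (X ^ 2 + C k - L ^ 2) ≠ 0) (h : (L * (X ^ 2 + C k - L ^ 2)).natDegree ≤ 1) :
    ∃ l : K, l ^ 2 = 1 ∧ L = C l * X := by
  rw [natDegree_mul (left_ne_zero_of_mul h₀) (right_ne_zero_of_mul h₀)] at h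
  have hL : L.natDegree = 1 := by
    by_contra hL
    have hL₀ : L.natDegree < 1 := by lia
    have hlt : (L ^ 2).natDegree < (X ^ 2 + C k).natDegree := by
      rw [natDegree_pow, natDegree_X_pow_add_C]; lia
    rw [natDegree_sub_eq_left_of_natDegree_lt hlt, natDegree_X_pow_add_C] at h
    lia
  obtain ⟨l, m, rfl⟩ := exists_eq_X_add_C_of_natDegree_le_one hL.le
  have hexp : X ^ 2 + C k - (C l * X + C m) ^ 2 =
      C (1 - l ^ 2) * X ^ 2 + C (-(2 * (l * m))) * X + C (k - m ^ 2) := by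
    simp only [map_sub, map_neg, map_mul, map_pow, map_one, map_ofNat]; ring
  have hcoeff (n : ℕ) (hn : 0 < n) := coeff_eq_zero_of_natDegree_lt
    (lt_of_le_of_lt (b := 0) (by lia) hn : (X ^ 2 + C k - (C l * X + C m) ^ 2).natDegree < n)
  rw [hexp] at hcoeff
  have hl : l ^ 2 = 1 := by
    have := hcoeff 2 two_pos
    exact (sub_eq_zero.1 (by simpa [-map_sub, coeff_X, coeff_C] using this)).symm
  have hm : m = 0 := by
    have hl₀ : l ≠ 0 := by rintro rfl; simp at hl
    simpa [-map_sub, coeff_X, coeff_C, hl₀, two_ne_zero] using hcoeff 1 one_pos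
  exact ⟨l, hl, by rw [hm, map_zero, add_zero]⟩

/-- Cancelling `d ^ 3` leaves `L * (X ^ 2 + C k - L ^ 2) = 4 * d` for `L = Q / d`; as the right side
has degree at most one, the quadratic terms on the left must cancel. -/
theorem exists_eq_mul_C_mul_X_of_cayley [NeZero (2 : K)] {Q d : K[X]} {k : K} (hd₀ : d ≠ 0)
    (hd : d.natDegree ≤ 1) (h : Q ^ 3 - (X ^ 2 + C k) * Q * d ^ 2 + 4 * d ^ 4 = 0) :
    ∃ l : K, l ^ 2 = 1 ∧ Q = d * (C l * X) ∧ 4 * d = C (l * k) * X := by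
  obtain ⟨L, rfl⟩ : d ∣ Q := dvd_of_dvd_pow_of_natDegree_le_one hd₀ hd (n := 3)
    ⟨(X ^ 2 + C k) * Q * d - 4 * d ^ 3, by linear_combination h⟩
  have hL : L * (X ^ 2 + C k - L ^ 2) = C 4 * d :=
    mul_left_cancel₀ (pow_ne_zero 3 hd₀) (by rw [map_ofNat]; linear_combination -h)
  have h4 : (4 : K) ≠ 0 := by
    convert pow_ne_zero 2 (two_ne_zero (α := K)) using 1; norm_num
  obtain ⟨l, hl, rfl⟩ := exists_eq_C_mul_X_of_natDegree_mul_le_one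
    (hL ▸ mul_ne_zero (C_ne_zero.2 h4) hd₀) (hL ▸ (natDegree_C_mul_le _ _).trans hd)
  refine ⟨l, hl, rfl, ?_⟩
  have hl' : (C l : K[X]) ^ 2 = 1 := by rw [← map_pow, hl, map_one]
  rw [map_ofNat] at hL
  rw [← hL, map_mul]
  linear_combination (-C l * X ^ 3 : K[X]) * hl'

theorem coeffs_of_cayley_pencil [NeZero (2 : K)] {p β γ q μ k : K}
    (hd : C q * X + C μ ≠ 0)
    (h : (C p * X ^ 2 + C β * X + C γ) ^ 3 -
      (X ^ 2 + C k) * (C p * X ^ 2 + C β * X + C γ) * (C q * X + C μ) ^ 2 +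
      4 * (C q * X + C μ) ^ 4 = 0) :
    q ≠ 0 ∧ p ^ 2 = q ^ 2 ∧ β = 0 ∧ γ = 0 ∧ μ = 0 ∧ k = 4 * p := by
  have h2 : (2 : K) ≠ 0 := two_ne_zero
  obtain ⟨l, hl, hQ, hd'⟩ := exists_eq_mul_C_mul_X_of_cayley hd natDegree_linear_le h
  have hQ' : Cubic.toPoly ⟨0, p, β, γ⟩ = Cubic.toPoly ⟨0, q * l, μ * l, 0⟩ := by
    simp only [Cubic.toPoly, map_mul, map_zero]; linear_combination hQ
  have hd'' : Cubic.toPoly ⟨0, 0, 4 * q, 4 * μ⟩ = Cubic.toPoly ⟨0, 0, l * k, 0⟩ := by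
    simp only [Cubic.toPoly, map_mul, map_zero, map_ofNat] at hd' ⊢; linear_combination hd'
  have hp : p = q * l := Cubic.b_of_eq hQ'
  have hβ : β = μ * l := Cubic.c_of_eq hQ'
  have hk : 4 * q = l * k := Cubic.c_of_eq hd''
  have hμ : μ = 0 :=
    mul_left_cancel₀ h2 (mul_left_cancel₀ h2 (by linear_combination Cubic.d_of_eq hd''))
  refine ⟨?_, by rw [hp, mul_pow, hl, mul_one], by rw [hβ, hμ, zero_mul], Cubic.d_of_eq hQ', hμ,
    by linear_combination (-k) * hl - l * hk - 4 * hp⟩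
  rintro rfl
  exact hd (by rw [hμ, map_zero, zero_mul, add_zero])

variable (M : Matrix (Fin 3) (Fin 3) K)

theorem det_kernel_X : (kernel M (X : K[X])).det =
    C (M 0 0 * M 2 2 - M 0 2 * M 2 0) * X +
      C (M 2 0 * M 0 1 * M 1 2 + M 0 2 * M 1 0 * M 2 1 -
        (M 0 0 * M 2 1 * M 1 2 + M 2 2 * M 1 0 * M 0 1)) := by
  simp only [det_fin_three, kernel, of_apply, cons_val, algebraMap_eq, map_add, map_sub, map_mul]
  ring

theorem quadInv_kernel_X : quadInv (kernel M (X : K[X])) =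
    X ^ 2 + C (8 * (M 0 0 * M 2 2 + M 0 2 * M 2 0) - 4 * (M 1 0 * M 1 2 + M 0 1 * M 2 1)) := by
  simp only [quadInv, kernel, of_apply, cons_val, algebraMap_eq, map_add, map_sub, map_mul,
    map_ofNat]
  ring

theorem quartInv_kernel_X : quartInv (kernel M (X : K[X])) =
    C (M 0 0 * M 2 2 + M 0 2 * M 2 0) * X ^ 2 +
      C (-(M 2 0 * M 0 1 * M 1 2 + M 0 2 * M 1 0 * M 2 1 +
        (M 0 0 * M 2 1 * M 1 2 + M 2 2 * M 1 0 * M 0 1))) * X +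
      C (2 * ((M 0 0 * M 2 2 - M 0 2 * M 2 0) ^ 2 -
        ((M 1 0 * M 2 2 - M 2 0 * M 1 2) * (M 0 0 * M 1 2 - M 1 0 * M 0 2) +
          (M 0 0 * M 2 1 - M 2 0 * M 0 1) * (M 0 1 * M 2 2 - M 2 1 * M 0 2)) +
        M 0 1 * M 2 1 * M 1 2 * M 1 0)) := by
  simp only [quartInv, kernel, of_apply, cons_val, algebraMap_eq, map_add, map_sub, map_mul,
    map_neg, map_pow, map_ofNat]
  ring

theorem entries_of_cayley_kernel_X [NeZero (2 : K)]
    (hdet : (kernel M (X : K[X])).det ≠ 0) (h : cayley (kernel M (X : K[X])) = 0) :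
    ((M 0 2 * M 2 0 = 0 ∧ M 0 0 * M 2 2 ≠ 0) ∨ (M 0 0 * M 2 2 = 0 ∧ M 0 2 * M 2 0 ≠ 0)) ∧
      M 1 0 * M 1 2 + M 0 1 * M 2 1 = M 0 0 * M 2 2 + M 0 2 * M 2 0 ∧
      M 2 2 * M 1 0 * M 0 1 + M 0 0 * M 2 1 * M 1 2 = 0 ∧
      M 0 2 * M 1 0 * M 2 1 + M 2 0 * M 0 1 * M 1 2 = 0 ∧
      (M 0 0 * M 2 2 - M 0 2 * M 2 0) ^ 2 + M 0 1 * M 2 1 * M 1 2 * M 1 0 =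
        (M 1 0 * M 2 2 - M 2 0 * M 1 2) * (M 0 0 * M 1 2 - M 1 0 * M 0 2) +
          (M 0 0 * M 2 1 - M 2 0 * M 0 1) * (M 0 1 * M 2 2 - M 2 1 * M 0 2) := by
  have h2 : (2 : K) ≠ 0 := two_ne_zero
  rw [cayley, quadInv_kernel_X, quartInv_kernel_X, det_kernel_X] at h
  rw [det_kernel_X] at hdet
  obtain ⟨hq, hpq, hβ, hγ, hμ, hk⟩ := coeffs_of_cayley_pencil hdet h
  have hprod : (M 0 0 * M 2 2) * (M 0 2 * M 2 0) = 0 :=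
    mul_left_cancel₀ h2 (mul_left_cancel₀ h2 (by linear_combination hpq))
  refine ⟨?_, mul_left_cancel₀ h2 (mul_left_cancel₀ h2 (by linear_combination -hk)),
    mul_left_cancel₀ h2 (by linear_combination -hβ - hμ),
    mul_left_cancel₀ h2 (by linear_combination hμ - hβ),
    mul_left_cancel₀ h2 (by linear_combination hγ)⟩
  rcases mul_eq_zero.1 hprod with h₁ | h₁
  · exact .inr ⟨h₁, fun h₂ => hq (by rw [h₁, h₂, sub_zero])⟩
  · exact .inl ⟨h₁, fun h₂ => hq (by rw [h₁, h₂, sub_zero])⟩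

theorem cayley_kernel_X_eq_zero_of_transcendental {F : Type*} [Field F] [Algebra K F] {s : F}
    (hs : Transcendental K s) (hdet : (kernel M s).det ≠ 0) (h : cayley (kernel M s) = 0) :
    (kernel M (X : K[X])).det ≠ 0 ∧ cayley (kernel M (X : K[X])) = 0 := by
  have hmap : (kernel M (X : K[X])).map (aeval s) = kernel M s := by rw [map_kernel, aeval_X]
  refine ⟨fun h₀ => hdet ?_, transcendental_iff.1 hs _ ?_⟩
  · rw [← hmap]
    exact (AlgHom.map_det (aeval s) _).symm.trans (by rw [h₀, map_zero])
  · rw [← h, ← hmap]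
    exact map_cayley _ (aeval s : K[X] →ₐ[K] F).toRingHom

/-- System (4a) for the model with step matrix `M`, where `M i j` stands for `a_{i-1,j-1}`. -/
def IsSystemA (M : Matrix (Fin 3) (Fin 3) K) : Prop :=
  M 2 2 = 0 ∧ M 1 2 = 0 ∧ M 1 0 = 0 ∧ M 0 0 = 0 ∧ M 2 0 * M 0 2 = M 2 1 * M 0 1

/-- System (4b) for the model with step matrix `M`, where `M i j` stands for `a_{i-1,j-1}`. -/
def IsSystemB (M : Matrix (Fin 3) (Fin 3) K) : Prop :=
  M 2 0 = 0 ∧ M 1 2 = 0 ∧ M 1 0 = 0 ∧ M 0 2 = 0 ∧ M 2 2 * M 0 0 = M 2 1 * M 0 1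

variable {M}

theorem eq_zero_of_mul_eq_zero_of_add_sq_eq_zero {u v c d : K} (hc : c ≠ 0) (hd : d ≠ 0)
    (huv : u * v = 0) (h : c * u ^ 2 + d * v ^ 2 = 0) : u = 0 ∧ v = 0 := by
  rcases mul_eq_zero.1 huv with rfl | rfl <;> simpa [hc, hd] using h

theorem apply_zero_two_eq_zero (hBC : M 0 2 * M 2 0 = 0) (hAD : M 0 0 * M 2 2 ≠ 0)
    (h₁ : M 1 0 * M 1 2 + M 0 1 * M 2 1 = M 0 0 * M 2 2)
    (h₃ : M 0 2 * M 1 0 * M 2 1 + M 2 0 * M 0 1 * M 1 2 = 0)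
    (h₄ : M 0 2 * (M 2 2 * M 1 0 ^ 2 + M 0 0 * M 2 1 ^ 2) +
      M 2 0 * (M 2 2 * M 0 1 ^ 2 + M 0 0 * M 1 2 ^ 2) + M 0 1 * M 2 1 * (M 1 2 * M 1 0) = 0) :
    M 0 2 = 0 := by
  obtain ⟨hA, hD⟩ := mul_ne_zero_iff.1 hAD
  by_contra hB
  have hC : M 2 0 = 0 := (mul_eq_zero.1 hBC).resolve_left hB
  have hWR : M 1 0 * M 2 1 = 0 :=
    mul_left_cancel₀ hB (by linear_combination h₃ - M 0 1 * M 1 2 * hC)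
  have hsq : M 2 2 * M 1 0 ^ 2 + M 0 0 * M 2 1 ^ 2 = 0 :=
    mul_left_cancel₀ hB (by
      linear_combination h₄ - (M 2 2 * M 0 1 ^ 2 + M 0 0 * M 1 2 ^ 2) * hC - M 0 1 * M 1 2 * hWR)
  obtain ⟨hW, hR⟩ := eq_zero_of_mul_eq_zero_of_add_sq_eq_zero hD hA hWR hsq
  exact hAD (by rw [← h₁, hW, hR, zero_mul, mul_zero, add_zero])

theorem isSystemB_or_isSystemB_transpose (hBC : M 0 2 * M 2 0 = 0) (hAD : M 0 0 * M 2 2 ≠ 0)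
    (h₁ : M 1 0 * M 1 2 + M 0 1 * M 2 1 = M 0 0 * M 2 2)
    (h₂ : M 2 2 * M 1 0 * M 0 1 + M 0 0 * M 2 1 * M 1 2 = 0)
    (h₃ : M 0 2 * M 1 0 * M 2 1 + M 2 0 * M 0 1 * M 1 2 = 0)
    (h₄ : M 0 2 * (M 2 2 * M 1 0 ^ 2 + M 0 0 * M 2 1 ^ 2) +
      M 2 0 * (M 2 2 * M 0 1 ^ 2 + M 0 0 * M 1 2 ^ 2) + M 0 1 * M 2 1 * (M 1 2 * M 1 0) = 0) :
    IsSystemB M ∨ IsSystemB Mᵀ := by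
  obtain ⟨hA, hD⟩ := mul_ne_zero_iff.1 hAD
  have hB : M 0 2 = 0 := apply_zero_two_eq_zero hBC hAD h₁ h₃ h₄
  have hC : M 2 0 = 0 := apply_zero_two_eq_zero (M := Mᵀ) ((mul_comm _ _).trans hBC) hAD
    (by simp only [transpose_apply]; linear_combination h₁)
    (by simp only [transpose_apply]; linear_combination h₃)
    (by simp only [transpose_apply]; linear_combination h₄)
  rw [hB, hC, zero_mul, zero_mul, zero_add, zero_add] at h₄
  have hWL : M 1 0 * M 0 1 = 0 := pow_eq_zero_iff two_ne_zero |>.1 <| mul_left_cancel₀ hD <| by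
    linear_combination M 1 0 * M 0 1 * h₂ - M 0 0 * h₄
  have hRU : M 2 1 * M 1 2 = 0 := mul_left_cancel₀ hA (by linear_combination h₂ - M 2 2 * hWL)
  rcases mul_eq_zero.1 hWL with hW | hL <;> rcases mul_eq_zero.1 hRU with hR | hU
  · exact absurd h₁.symm (by rwa [hW, hR, zero_mul, mul_zero, add_zero])
  · exact .inl ⟨hC, hU, hW, hB, by linear_combination -h₁ + M 1 0 * hU⟩
  · refine .inr ⟨hB, hR, hL, hC, ?_⟩
    simp only [transpose_apply]
    linear_combination -h₁ + M 2 1 * hL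
  · exact absurd h₁.symm (by rwa [hL, hU, zero_mul, mul_zero, add_zero])

/-- Reversing the columns of the matrix amounts to the substitution `y ↦ y⁻¹`, which exchanges the
two systems; it reduces the case `M 0 0 * M 2 2 = 0` to the case `M 0 2 * M 2 0 = 0`. -/
theorem isSystem_of_cayley_kernel_X [NeZero (2 : K)]
    (hdet : (kernel M (X : K[X])).det ≠ 0) (h : cayley (kernel M (X : K[X])) = 0) :
    IsSystemA M ∨ IsSystemB M ∨ IsSystemA Mᵀ ∨ IsSystemB Mᵀ := by
  obtain ⟨hprod, h₁, h₂, h₃, h₄⟩ := entries_of_cayley_kernel_X M hdet h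
  rcases hprod with ⟨hBC, hAD⟩ | ⟨hAD, hBC⟩
  · rcases isSystemB_or_isSystemB_transpose hBC hAD (by linear_combination h₁ + hBC) h₂ h₃
      (by linear_combination h₄ + (M 0 0 * M 2 2) * h₁ +
        (M 0 1 * M 2 1 + M 1 0 * M 1 2 - M 0 2 * M 2 0 + 3 * (M 0 0 * M 2 2)) * hBC) with hB | hB
    · exact .inr (.inl hB)
    · exact .inr (.inr (.inr hB))
  · have h₁' : M 1 2 * M 1 0 + M 0 1 * M 2 1 = M 0 2 * M 2 0 := by linear_combination h₁ + hAD
    have h₂' : M 2 0 * M 1 2 * M 0 1 + M 0 2 * M 2 1 * M 1 0 = 0 := by linear_combination h₃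
    have h₃' : M 0 0 * M 1 2 * M 2 1 + M 2 2 * M 0 1 * M 1 0 = 0 := by linear_combination h₂
    have h₄' : M 0 0 * (M 2 0 * M 1 2 ^ 2 + M 0 2 * M 2 1 ^ 2) +
        M 2 2 * (M 2 0 * M 0 1 ^ 2 + M 0 2 * M 1 0 ^ 2) + M 0 1 * M 2 1 * (M 1 0 * M 1 2) = 0 := by
      linear_combination h₄ + (M 0 2 * M 2 0) * h₁ +
        (M 0 1 * M 2 1 + M 1 0 * M 1 2 - M 0 0 * M 2 2 + 3 * (M 0 2 * M 2 0)) * hAD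
    rcases isSystemB_or_isSystemB_transpose (M := M.submatrix id Fin.rev) hAD hBC h₁' h₂' h₃' h₄'
      with ⟨h22, h10, h12, h00, hmul⟩ | ⟨h00, h21, h01, h22, hmul⟩
    · exact .inl ⟨h22, h12, h10, h00, hmul⟩
    · refine .inr (.inr (.inl ⟨h22, h21, h01, h00, ?_⟩))
      exact (mul_comm _ _).trans (hmul.trans (mul_comm _ _))

end Pencil

section Dihedral

variable {K F : Type*} [Field K] [Field F] [Algebra K F] {x y : F} {Φ Ψ : F →ₐ[K] F}
  {M : Matrix (Fin 3) (Fin 3) K}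

/-- The quotients defining the Vieta involutions of `M` and `Mᵀ` are monomials in `y` and in `x`.
The condition `i * j = 2` makes the square of the composition invert `x` and `y` up to constants. -/
def HasMonomialQuotients (M : Matrix (Fin 3) (Fin 3) K) (x y : F) : Prop :=
  ∃ (α β : K) (i j : ℤ), α ≠ 0 ∧ β ≠ 0 ∧ i * j = 2 ∧
    rowEval M 0 y / rowEval M 2 y = algebraMap K F α * y ^ i ∧
    rowEval Mᵀ 0 x / rowEval Mᵀ 2 x = algebraMap K F β * x ^ j

theorem HasMonomialQuotients.of_transpose (h : HasMonomialQuotients Mᵀ y x) :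
    HasMonomialQuotients M x y := by
  obtain ⟨β, α, j, i, hβ, hα, hji, hy, hx⟩ := h
  exact ⟨α, β, i, j, hα, hβ, (mul_comm i j).trans hji, hx, hy⟩

theorem IsSystemA.hasMonomialQuotients (hM : IsSystemA M) (h₂ : rowEval M 2 y ≠ 0)
    (h₀' : rowEval Mᵀ 0 x ≠ 0) (h₂' : rowEval Mᵀ 2 x ≠ 0) : HasMonomialQuotients M x y := by
  obtain ⟨h22, h12, h10, h00, hmul⟩ := hM
  have h20 : M 2 0 ≠ 0 := fun h => h₀' (by simp [rowEval_eq_sum, h00, h10, h])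
  have h02 : M 0 2 ≠ 0 := fun h => h₂' (by simp [rowEval_eq_sum, h22, h12, h])
  have h01 : M 0 1 ≠ 0 := right_ne_zero_of_mul (hmul ▸ mul_ne_zero h20 h02)
  refine ⟨M 0 1 / M 2 0, M 2 0 / M 0 2, 1, 2, div_ne_zero h01 h20, div_ne_zero h20 h02, rfl, ?_, ?_⟩
  · have h20' : algebraMap K F (M 2 0) ≠ 0 := (map_ne_zero _).2 h20
    have hmul' := congrArg (algebraMap K F) hmul
    rw [map_mul, map_mul] at hmul'
    rw [div_eq_iff h₂, map_div₀, zpow_one, div_mul_eq_mul_div, div_mul_eq_mul_div, eq_div_iff h20']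
    simp only [rowEval_eq_sum, h00, h22, map_zero]
    linear_combination y ^ 2 * hmul'
  · simp only [rowEval_eq_sum, transpose_apply, h00, h10, h12, h22, map_zero, map_div₀, zero_mul,
      zero_add, add_zero, mul_div_right_comm, zpow_ofNat]

theorem IsSystemB.hasMonomialQuotients (hM : IsSystemB M) (h₂ : rowEval M 2 y ≠ 0)
    (h₀' : rowEval Mᵀ 0 x ≠ 0) (h₂' : rowEval Mᵀ 2 x ≠ 0) : HasMonomialQuotients M x y := by
  obtain ⟨h20, h12, h10, h02, hmul⟩ := hM
  have h00 : M 0 0 ≠ 0 := fun h => h₀' (by simp [rowEval_eq_sum, h20, h10, h])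
  have h22 : M 2 2 ≠ 0 := fun h => h₂' (by simp [rowEval_eq_sum, h02, h12, h])
  have h01 : M 0 1 ≠ 0 := right_ne_zero_of_mul (hmul ▸ mul_ne_zero h22 h00)
  refine ⟨M 0 1 / M 2 2, M 0 0 / M 2 2, -1, -2, div_ne_zero h01 h22, div_ne_zero h00 h22, rfl,
    ?_, ?_⟩
  · have hy : y ≠ 0 := fun h => h₂ (by simp [rowEval_eq_sum, h20, h])
    have h22' : algebraMap K F (M 2 2) ≠ 0 := (map_ne_zero _).2 h22
    have hmul' := congrArg (algebraMap K F) hmul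
    rw [map_mul, map_mul] at hmul'
    rw [div_eq_iff h₂, map_div₀]
    simp only [rowEval_eq_sum, h20, h02, map_zero]
    field_simp
    linear_combination y * hmul'
  · simp only [rowEval_eq_sum, transpose_apply, h20, h10, h12, h02, map_zero, zero_mul, zero_add,
      add_zero, _root_.zpow_neg, div_eq_mul_inv, zpow_ofNat, map_mul, map_inv₀, mul_inv, mul_assoc]

theorem hasMonomialQuotients_of_isSystem (hΦ : IsVietaInvolution M x y Φ)
    (hΨ : IsVietaInvolution Mᵀ y x Ψ) (hx : x ≠ 0) (hy : y ≠ 0)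
    (hM : IsSystemA M ∨ IsSystemB M ∨ IsSystemA Mᵀ ∨ IsSystemB Mᵀ) :
    HasMonomialQuotients M x y := by
  have h₀ := hΦ.rowEval_zero_ne_zero hx
  have h₂ := hΦ.rowEval_two_ne_zero hx
  have h₀' := hΨ.rowEval_zero_ne_zero hy
  have h₂' := hΨ.rowEval_two_ne_zero hy
  rcases hM with hM | hM | hM | hM
  · exact hM.hasMonomialQuotients h₂ h₀' h₂'
  · exact hM.hasMonomialQuotients h₂ h₀' h₂'
  · exact .of_transpose (hM.hasMonomialQuotients h₂' h₀ h₂)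
  · exact .of_transpose (hM.hasMonomialQuotients h₂' h₀ h₂)

theorem HasMonomialQuotients.pow_four_eq_one_and_sq_ne_one (h : HasMonomialQuotients M x y)
    (hxy : AlgebraicIndependent K ![x, y]) (htop : IntermediateField.adjoin K {x, y} = ⊤)
    (hΦ : IsVietaInvolution M x y Φ) (hΨ : IsVietaInvolution Mᵀ y x Ψ) :
    (Φ * Ψ) ^ 4 = 1 ∧ (Φ * Ψ) ^ 2 ≠ 1 := by
  obtain ⟨α, β, i, j, hα, hβ, hij, hx, hy⟩ := h
  exact pow_four_eq_one_and_sq_ne_one_of_monomial hxy htop hα hβ hij (hx ▸ hΦ.map_fst) hΦ.map_snd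
    hΨ.map_snd (hy ▸ hΨ.map_fst)

end Dihedral

/-- The multiplicities of a model as a matrix: the entry `i j` is `a (i - 1) (j - 1)`, so that
exchanging the indices of `a` transposes the matrix. -/
def stepMatrix (a : ℤ → ℤ → ℂ) : Matrix (Fin 3) (Fin 3) ℂ :=
  !![a (-1) (-1), a (-1) 0, a (-1) 1; a 0 (-1), a 0 0, a 0 1; a 1 (-1), a 1 0, a 1 1]

theorem rowEval_div_rowEval {K F : Type*} [Field K] [Field F] [Algebra K F]
    (M : Matrix (Fin 3) (Fin 3) K) (i j : Fin 3) {y : F} (hy : y ≠ 0) :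
    rowEval M i y / rowEval M j y =
      (algebraMap K F (M i 0) * y⁻¹ + algebraMap K F (M i 1) + algebraMap K F (M i 2) * y) /
        (algebraMap K F (M j 0) * y⁻¹ + algebraMap K F (M j 1) + algebraMap K F (M j 2) * y) := by
  have hlaurent (k : Fin 3) : rowEval M k y =
      (algebraMap K F (M k 0) * y⁻¹ + algebraMap K F (M k 1) + algebraMap K F (M k 2) * y) * y := by
    rw [rowEval_eq_sum]; field_simp
  rw [hlaurent, hlaurent, mul_div_mul_right _ _ hy]

end Biquadratic

theorem algebraicIndependent_Xr_Yr : AlgebraicIndependent ℂ ![Xr, Yr] := by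
  have h := (MvPolynomial.algebraicIndependent_X (Fin 2) ℂ).map'
    (f := IsScalarTower.toAlgHom ℂ (MvPolynomial (Fin 2) ℂ) RF) (IsFractionRing.injective _ RF)
  convert h using 1
  ext i; fin_cases i <;> rfl

theorem adjoin_Xr_Yr_eq_top : IntermediateField.adjoin ℂ {Xr, Yr} = ⊤ := by
  have hpoly (p : MvPolynomial (Fin 2) ℂ) :
      algebraMap _ RF p ∈ IntermediateField.adjoin ℂ {Xr, Yr} := by
    induction p using MvPolynomial.induction_on with
    | C c => exact (IntermediateField.adjoin ℂ {Xr, Yr}).algebraMap_mem c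
    | add p q hp hq => rw [map_add]; exact add_mem hp hq
    | mul_X p i hp =>
      rw [map_mul]
      refine mul_mem hp (IntermediateField.subset_adjoin _ _ ?_)
      fin_cases i
      exacts [.inl rfl, .inr rfl]
  refine eq_top_iff.2 fun z _ => ?_
  obtain ⟨p, q, -, rfl⟩ := IsFractionRing.div_surjective (A := MvPolynomial (Fin 2) ℂ) z
  exact div_mem (hpoly p) (hpoly q)

open Matrix Biquadratic in
theorem statement16_general {K F : Type*} [Field K] [NeZero (2 : K)] [Field F] [Algebra K F]
    {x y : F} (hxy : AlgebraicIndependent K ![x, y])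
    (htop : IntermediateField.adjoin K {x, y} = ⊤) {M : Matrix (Fin 3) (Fin 3) K}
    {Φ Ψ : F →ₐ[K] F} (hΦ : IsVietaInvolution M x y Φ) (hΨ : IsVietaInvolution Mᵀ y x Ψ) :
    ((Φ * Ψ) ^ 4 = 1 ∧ (Φ * Ψ) ^ 2 ≠ 1) ↔
      IsSystemA M ∨ IsSystemB M ∨ IsSystemA Mᵀ ∨ IsSystemB Mᵀ := by
  refine ⟨fun ⟨h₄, h₂⟩ => ?_, fun hM => ?_⟩
  · obtain ⟨s, hs, hdet, hcayley⟩ :=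
      exists_transcendental_cayley_kernel_eq_zero hxy htop hΦ hΨ h₄ h₂
    obtain ⟨hdetX, hcayleyX⟩ := cayley_kernel_X_eq_zero_of_transcendental M hs hdet hcayley
    exact isSystem_of_cayley_kernel_X hdetX hcayleyX
  · have hmono := hasMonomialQuotients_of_isSystem hΦ hΨ (hxy.ne_zero 0) (hxy.ne_zero 1) hM
    exact hmono.pow_four_eq_one_and_sq_ne_one hxy htop hΦ hΨ

theorem statement16 (a : ℤ → ℤ → ℂ) (hInt : Interesting a)
    (Φ Ψ : RF →ₐ[ℂ] RF)
    (hΦx : Φ Xr = Xr⁻¹ *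
      ((Cr (a (-1) (-1)) * Yr⁻¹ + Cr (a (-1) 0) + Cr (a (-1) 1) * Yr) /
        (Cr (a 1 (-1)) * Yr⁻¹ + Cr (a 1 0) + Cr (a 1 1) * Yr)))
    (hΦy : Φ Yr = Yr)
    (hΨx : Ψ Xr = Xr)
    (hΨy : Ψ Yr = Yr⁻¹ *
      ((Cr (a (-1) (-1)) * Xr⁻¹ + Cr (a 0 (-1)) + Cr (a 1 (-1)) * Xr) /
        (Cr (a (-1) 1) * Xr⁻¹ + Cr (a 0 1) + Cr (a 1 1) * Xr))) :
    ((Φ.comp Ψ).comp ((Φ.comp Ψ).comp ((Φ.comp Ψ).comp (Φ.comp Ψ))) = AlgHom.id ℂ RF ∧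
        (Φ.comp Ψ).comp (Φ.comp Ψ) ≠ AlgHom.id ℂ RF) ↔
      (Fam4a a ∨ Fam4b a ∨ Fam4a (fun u v => a v u) ∨ Fam4b (fun u v => a v u)) := by
  have hX : Xr ≠ 0 := algebraicIndependent_Xr_Yr.ne_zero 0
  have hY : Yr ≠ 0 := algebraicIndependent_Xr_Yr.ne_zero 1
  have hΦ : Biquadratic.IsVietaInvolution (Biquadratic.stepMatrix a) Xr Yr Φ :=
    ⟨hΦy, by rw [hΦx, Biquadratic.rowEval_div_rowEval _ _ _ hY]; rfl⟩
  have hΨ : Biquadratic.IsVietaInvolution (Biquadratic.stepMatrix a).transpose Yr Xr Ψ :=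
    ⟨hΨx, by rw [hΨy, Biquadratic.rowEval_div_rowEval _ _ _ hX]; rfl⟩
  exact statement16_general algebraicIndependent_Xr_Yr adjoin_Xr_Yr_eq_top hΦ hΨ

end
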